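/- For n ≥ 1 and subsets I, J, K of {1,...,n-1}, the number of triples of permutations (σ₁, σ₂, σ₃) in S_n with σ₁σ₂σ₃ = id, Des(σ₁) = I, Des(σ₂) = J, Des(σ₃) = K equals Σ_{λ,μ,ν ⊢ n} g(λ,μ,ν) · d_{λ,I} · d_{μ,J} · d_{ν,K}. -/

import Mathlib

open scoped Classical

noncomputable section

/-- Descent set of a permutation of `Fin n`, as a subset of `{1, ..., n-1}`
(1-indexed: `i` is a descent of `π` iff `π(i) > π(i+1)`). -/
def permDes {n : ℕ} (σ : Equiv.Perm (Fin n)) : Finset ℕ :=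
  (Finset.Icc 1 (n - 1)).filter fun i =>
    ∃ h : i < n, σ ⟨i, h⟩ < σ ⟨i - 1, by omega⟩

/-- Number of entries of a semistandard Young tableau equal to `j`. -/
def ssytWeight {μ : YoungDiagram} (T : SemistandardYoungTableau μ) (j : ℕ) : ℕ :=
  (μ.cells.filter fun c => T c.1 c.2 = j).card

/-- A standard Young tableau with `n` boxes: each of `1, ..., n` appears exactly once. -/
def IsStdYT {μ : YoungDiagram} (n : ℕ) (T : SemistandardYoungTableau μ) : Prop :=
  ∀ k ∈ Finset.Icc 1 n, (μ.cells.filter fun c => T c.1 c.2 = k).card = 1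

/-- Descent set of a standard Young tableau: `k` is a descent iff `k+1` lies in
a strictly lower row than `k`. -/
def sytDes {μ : YoungDiagram} (n : ℕ) (T : SemistandardYoungTableau μ) : Finset ℕ :=
  (Finset.Icc 1 (n - 1)).filter fun k =>
    ∃ c₁ ∈ μ.cells, ∃ c₂ ∈ μ.cells,
      T c₁.1 c₁.2 = k ∧ T c₂.1 c₂.2 = k + 1 ∧ c₁.1 < c₂.1

/-- `d_{λ,I}`: the number of standard Young tableaux of shape `λ` with descent set `I`. -/
def dCoef (μ : YoungDiagram) (n : ℕ) (I : Finset ℕ) : ℕ :=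
  Nat.card {T : SemistandardYoungTableau μ // IsStdYT n T ∧ sytDes n T = I}

/-- The Young diagram of a partition of `n`. -/
def toYD {n : ℕ} (p : n.Partition) : YoungDiagram where
  cells := (Finset.range n ×ˢ Finset.range n).filter fun c =>
    c.1 < (p.parts.filter fun a => c.2 < a).card
  isLowerSet := by
    intro x y hyx hx
    simp only [Finset.coe_filter, Set.mem_setOf_eq, Finset.mem_product,
      Finset.mem_range] at hx ⊢
    obtain ⟨⟨h1, h2⟩, h3⟩ := hx
    refine ⟨⟨lt_of_le_of_lt hyx.1 h1, lt_of_le_of_lt hyx.2 h2⟩,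
      lt_of_le_of_lt hyx.1 (lt_of_lt_of_le h3 ?_)⟩
    exact Multiset.card_le_card
      (Multiset.monotone_filter_right _ fun a ha => lt_of_le_of_lt hyx.2 ha)

/-- The Schur function of shape `μ`, in variables `x_0, x_1, x_2, ...`. -/
def schur (μ : YoungDiagram) : MvPowerSeries ℕ ℂ :=
  fun d => (Nat.card {T : SemistandardYoungTableau μ // ∀ j, ssytWeight T j = d j} : ℂ)

/-- The power sum symmetric function `p_k = Σ_i x_i^k`. -/
def psum (k : ℕ) : MvPowerSeries ℕ ℂ :=
  fun d => if ∃ i, d = Finsupp.single i k then 1 else 0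

/-- Product of power sums over a multiset of integers. -/
def pProd (m : Multiset ℕ) : MvPowerSeries ℕ ℂ := (m.map psum).prod

/-- The full cycle type of a permutation of `Fin n` (including fixed points as parts `1`). -/
def fullCycleType {n : ℕ} (σ : Equiv.Perm (Fin n)) : Multiset ℕ :=
  σ.cycleType + Multiset.replicate (n - σ.cycleType.sum) 1


/-! ### Block functions -/

/-- The index of the block containing `k`, for the composition associated with `I`. -/
def bl (I : Finset ℕ) (k : ℕ) : ℕ := (I.filter (fun m => m < k)).card

lemma bl_mono (I : Finset ℕ) : Monotone (bl I) := by
  intro a b h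
  apply Finset.card_le_card
  intro m hm
  simp only [Finset.mem_filter] at hm ⊢
  exact ⟨hm.1, by omega⟩

lemma bl_zero (I : Finset ℕ) : bl I 0 = 0 := by simp [bl]

lemma bl_eq_of_forall (I : Finset ℕ) {a b : ℕ} (hab : a ≤ b) :
    bl I a = bl I b ↔ ∀ m, a ≤ m → m < b → m ∉ I := by
  have hsub : I.filter (fun m => m < a) ⊆ I.filter (fun m => m < b) := by
    intro m hm
    simp only [Finset.mem_filter] at hm ⊢
    exact ⟨hm.1, by omega⟩
  constructor
  · intro h m h1 h2 h3
    have := Finset.eq_of_subset_of_card_le hsub h.ge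
    have h4 : m ∈ I.filter (fun m => m < b) := by simp [h2, h3]
    rw [← this] at h4
    simp at h4; omega
  · intro h
    unfold bl
    congr 1
    ext m
    simp only [Finset.mem_filter]
    constructor
    · rintro ⟨h1, h2⟩; exact ⟨h1, by omega⟩
    · rintro ⟨h1, h2⟩
      refine ⟨h1, ?_⟩
      by_contra h3
      exact h m (by omega) h2 h1

/-- The weakly increasing word on `Fin n` associated with `I`. -/
def bw (n : ℕ) (I : Finset ℕ) (i : Fin n) : ℕ := bl I (i + 1)

lemma bw_mono (n : ℕ) (I : Finset ℕ) : Monotone (bw n I) := by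
  intro a b h
  apply bl_mono
  have : (a : ℕ) ≤ b := h
  omega

lemma permDes_subset_iff {n : ℕ} (σ : Equiv.Perm (Fin n)) (I : Finset ℕ) :
    permDes σ ⊆ I ↔ ∀ i j : Fin n, i < j → bw n I i = bw n I j → σ i < σ j := by
  constructor
  · intro h
    have key : ∀ d : ℕ, ∀ i j : Fin n, (j : ℕ) = i + (d + 1) → bw n I i = bw n I j → σ i < σ j := by
      intro d
      induction d with
      | zero =>
        intro i j hij hb
        by_contra hlt
        have hne : σ i ≠ σ j := fun he => by
          have := σ.injective he
          rw [this] at hij; omega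
        have hlt' : σ j < σ i := lt_of_le_of_ne (not_lt.mp hlt) hne.symm
        have hmem : (j : ℕ) ∈ permDes σ := by
          simp only [permDes, Finset.mem_filter, Finset.mem_Icc]
          refine ⟨⟨by omega, by omega⟩, j.2, ?_⟩
          have : (⟨(j : ℕ) - 1, by omega⟩ : Fin n) = i := by
            apply Fin.ext; simp; omega
          rw [this]; exact hlt'
        have := (bl_eq_of_forall I (a := i + 1) (b := j + 1) (by omega)).mp hb j (by omega) (by omega)
        exact this (h hmem)
      | succ d ih =>
        intro i j hij hb
        let k : Fin n := ⟨i + (d + 1), by omega⟩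
        have h1 : bw n I i ≤ bw n I k := bw_mono n I (by show (i:ℕ) ≤ i + (d+1); omega)
        have h2 : bw n I k ≤ bw n I j := bw_mono n I (by show (i:ℕ) + (d+1) ≤ j; omega)
        have a1 := ih i k rfl (by omega)
        have hkj : bw n I k = bw n I j := by omega
        refine a1.trans ?_
        by_contra hlt
        have hne : σ k ≠ σ j := fun he => by
          have := σ.injective he
          have h3 : (k : ℕ) = j := by rw [this]
          simp only [k] at h3; omega
        have hlt' : σ j < σ k := lt_of_le_of_ne (not_lt.mp hlt) hne.symm
        have hmem : (j : ℕ) ∈ permDes σ := by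
          simp only [permDes, Finset.mem_filter, Finset.mem_Icc]
          refine ⟨⟨by omega, by omega⟩, j.2, ?_⟩
          have : (⟨(j : ℕ) - 1, by omega⟩ : Fin n) = k := by
            apply Fin.ext; simp [k]; omega
          rw [this]; exact hlt'
        have := (bl_eq_of_forall I (a := i + 1) (b := j + 1) (by omega)).mp hb j (by omega) (by omega)
        exact this (h hmem)
    intro i j hij hb
    have hij' : (i : ℕ) < j := hij
    exact key (j - i - 1) i j (by omega) hb
  · intro h k hk
    simp only [permDes, Finset.mem_filter, Finset.mem_Icc] at hk
    obtain ⟨⟨h1, h2⟩, h3, h4⟩ := hk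
    by_contra hI
    refine absurd (h ⟨k - 1, by omega⟩ ⟨k, h3⟩ ?_ ?_) (not_lt.mpr h4.le)
    · show k - 1 < k; omega
    · apply (bl_eq_of_forall I _).mpr
      · intro m hm1 hm2
        have : m = k := by simp at hm1 hm2; omega
        rwa [this]
      · simp

/-- The content of a word. -/
def cnt {α : Type*} [Fintype α] (w : α → ℕ) : ℕ →₀ ℕ := ∑ x, Finsupp.single (w x) 1

lemma cnt_apply {α : Type*} [Fintype α] (w : α → ℕ) (j : ℕ) :
    cnt w j = (Finset.univ.filter fun x => w x = j).card := by
  simp [cnt, Finsupp.finsetSum_apply, Finsupp.single_apply]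

lemma cnt_comp {α : Type*} [Fintype α] (w : α → ℕ) (π : Equiv.Perm α) : cnt (w ∘ π) = cnt w := by
  unfold cnt
  exact Equiv.sum_comp π (fun x => Finsupp.single (w x) 1)

lemma exists_perm_of_cnt_eq {α : Type*} [Fintype α] (w v : α → ℕ) (h : cnt w = cnt v) :
    ∃ π : Equiv.Perm α, w = v ∘ π := by
  have e : ∀ j, Nonempty ({x // w x = j} ≃ {x // v x = j}) := by
    intro j
    rw [← Fintype.card_eq]
    rw [Fintype.card_subtype, Fintype.card_subtype]
    have := DFunLike.congr_fun h j
    rwa [cnt_apply, cnt_apply] at this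
  refine ⟨Equiv.ofFiberEquiv (fun j => (e j).some), ?_⟩
  ext x
  exact (Equiv.ofFiberEquiv_map _ x).symm

lemma eq_of_monotone_cnt {n : ℕ} (w v : Fin n → ℕ) (hw : Monotone w) (hv : Monotone v)
    (h : cnt w = cnt v) : w = v := by
  obtain ⟨π, hπ⟩ := exists_perm_of_cnt_eq w v h
  have := Tuple.unique_monotone (f := v) (σ := π) (τ := 1) (by rw [← hπ]; exact hw)
    (by simpa using hv)
  rw [hπ, this]; rfl

lemma sort_lt {n : ℕ} {L : Type*} [LinearOrder L] (f : Fin n → L) (hf : Function.Injective f) :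
    StrictMono (f ∘ Tuple.sort f) :=
  (Tuple.monotone_sort f).strictMono_of_injective (hf.comp (Tuple.sort f).injective)

lemma sort_symm_lt {n : ℕ} {L : Type*} [LinearOrder L] (f : Fin n → L)
    (hf : Function.Injective f) {x y : Fin n} (h : f x < f y) :
    (Tuple.sort f)⁻¹ x < (Tuple.sort f)⁻¹ y := by
  rw [← (sort_lt f hf).lt_iff_lt]
  simpa using h

lemma perm_eq_of_lt {n : ℕ} (σ τ : Equiv.Perm (Fin n))
    (h : ∀ i j, σ i < σ j → τ i < τ j) : σ = τ := by
  have : StrictMono (τ * σ⁻¹ : Equiv.Perm (Fin n)) := by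
    intro i j hij
    apply h
    simpa using hij
  have h2 : τ * σ⁻¹ = 1 := (Equiv.Perm.monotone_iff _).mp this.monotone
  exact (mul_inv_eq_one.mp h2).symm

/-! ### Triples of permutations and orbits of triples of words -/

/-- Triples of words with prescribed contents. -/
def TW (n : ℕ) (I J K : Finset ℕ) : Type :=
  {t : (Fin n → ℕ) × (Fin n → ℕ) × (Fin n → ℕ) //
    cnt t.1 = cnt (bw n I) ∧ cnt t.2.1 = cnt (bw n J) ∧ cnt t.2.2 = cnt (bw n K)}

instance TWaction (n : ℕ) (I J K : Finset ℕ) : MulAction (Equiv.Perm (Fin n)) (TW n I J K) where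
  smul g t := ⟨(t.1.1 ∘ (g⁻¹ : Equiv.Perm (Fin n)), t.1.2.1 ∘ (g⁻¹ : Equiv.Perm (Fin n)),
    t.1.2.2 ∘ (g⁻¹ : Equiv.Perm (Fin n))), by
      simp only [cnt_comp]; exact t.2⟩
  one_smul t := rfl
  mul_smul g h t := by
    apply Subtype.ext
    rfl

lemma TW_smul {n : ℕ} {I J K : Finset ℕ} (g : Equiv.Perm (Fin n)) (t : TW n I J K) :
    (g • t).1 = (t.1.1 ∘ (g⁻¹ : Equiv.Perm (Fin n)), t.1.2.1 ∘ (g⁻¹ : Equiv.Perm (Fin n)),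
    t.1.2.2 ∘ (g⁻¹ : Equiv.Perm (Fin n))) := rfl

/-- Triples of permutations with product one and descent sets contained in given sets. -/
def TP (n : ℕ) (I J K : Finset ℕ) : Type :=
  {t : Equiv.Perm (Fin n) × Equiv.Perm (Fin n) × Equiv.Perm (Fin n) //
        t.1 * t.2.1 * t.2.2 = 1 ∧ permDes t.1 ⊆ I ∧ permDes t.2.1 ⊆ J ∧ permDes t.2.2 ⊆ K}

/-- The triple of words attached to a triple of permutations. -/
def TPtoTW {n : ℕ} {I J K : Finset ℕ} (t : TP n I J K) : TW n I J K :=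
  ⟨(bw n I ∘ (t.1.2.1 * t.1.2.2 : Equiv.Perm (Fin n)), bw n J ∘ t.1.2.2, bw n K), by
    simp only [cnt_comp, and_self]⟩

/-- The lexicographic key of a triple of words. -/
def lexKey {n : ℕ} (t : (Fin n → ℕ) × (Fin n → ℕ) × (Fin n → ℕ)) (x : Fin n) : ℕ ×ₗ ℕ ×ₗ ℕ :=
  toLex (t.2.2 x, toLex (t.2.1 x, t.1 x))

lemma lexKey_inj {n : ℕ} (s t : (Fin n → ℕ) × (Fin n → ℕ) × (Fin n → ℕ))
    (h : lexKey s = lexKey t) : s = t := by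
  have h' := fun x => congrFun h x
  simp only [lexKey, toLex_inj, Prod.mk.injEq] at h'
  refine Prod.ext (funext fun x => (h' x).2.2) (Prod.ext (funext fun x => (h' x).2.1)
    (funext fun x => (h' x).1))

lemma TPtoTW_sorted {n : ℕ} {I J K : Finset ℕ} (t : TP n I J K) :
    Monotone (lexKey (TPtoTW t).1) := by
  obtain ⟨⟨σ₁, σ₂, σ₃⟩, h0, h1, h2, h3⟩ := t
  rw [permDes_subset_iff] at h1 h2 h3
  simp only at h0 h1 h2 h3
  rw [monotone_iff_forall_lt]
  intro i j hij
  simp only [lexKey, TPtoTW, Prod.Lex.toLex_le_toLex, Function.comp_apply, Equiv.Perm.mul_apply]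
  rcases (bw_mono n K hij.le).lt_or_eq with h | h
  · exact Or.inl h
  refine Or.inr ⟨h, ?_⟩
  have a3 := h3 i j hij h
  rcases (bw_mono n J a3.le).lt_or_eq with h | h
  · exact Or.inl h
  refine Or.inr ⟨h, ?_⟩
  exact bw_mono n I (h2 _ _ a3 h).le

lemma TPtoTW_inj {n : ℕ} {I J K : Finset ℕ} : Function.Injective
    (TPtoTW : TP n I J K → TW n I J K) := by
  rintro ⟨⟨σ₁, σ₂, σ₃⟩, h0, h1, h2, h3⟩ ⟨⟨τ₁, τ₂, τ₃⟩, k0, k1, k2, k3⟩ h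
  rw [permDes_subset_iff] at h1 h2 h3 k1 k2 k3
  simp only at h0 h1 h2 h3 k0 k1 k2 k3
  have hI := congrArg (fun t => t.1.1) h
  have hJ := congrArg (fun t => t.1.2.1) h
  simp only [TPtoTW] at hI hJ
  have hI' := fun x => congrFun hI x
  have hJ' := fun x => congrFun hJ x
  simp only [Function.comp_apply, Equiv.Perm.mul_apply] at hI' hJ'
  have h0' : ∀ x, σ₁ (σ₂ (σ₃ x)) = x := fun x => by
    have := congrArg (fun π : Equiv.Perm (Fin n) => π x) h0
    simpa using this
  have k0' : ∀ x, τ₁ (τ₂ (τ₃ x)) = x := fun x => by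
    have := congrArg (fun π : Equiv.Perm (Fin n) => π x) k0
    simpa using this
  -- the product σ₂ σ₃
  have e23 : σ₂ * σ₃ = τ₂ * τ₃ := by
    apply perm_eq_of_lt
    intro i j hij
    simp only [Equiv.Perm.mul_apply] at hij ⊢
    by_contra hn
    have hb : bw n I (σ₂ (σ₃ i)) = bw n I (σ₂ (σ₃ j)) := by
      apply le_antisymm (bw_mono n I hij.le)
      rw [hI', hI']
      exact bw_mono n I (not_lt.mp hn)
    have hl := h1 _ _ hij hb
    rw [h0', h0'] at hl
    have hn' : τ₂ (τ₃ j) < τ₂ (τ₃ i) := lt_of_le_of_ne (not_lt.mp hn) (fun he => by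
      have := τ₃.injective (τ₂.injective he)
      omega)
    have hl' := k1 _ _ hn' (by rw [← hI', ← hI', hb])
    rw [k0', k0'] at hl'
    omega
  have e3 : σ₃ = τ₃ := by
    apply perm_eq_of_lt
    intro i j hij
    by_contra hn
    have hb : bw n J (σ₃ i) = bw n J (σ₃ j) := by
      apply le_antisymm (bw_mono n J hij.le)
      rw [hJ', hJ']
      exact bw_mono n J (not_lt.mp hn)
    have hl := h2 _ _ hij hb
    have hn' : τ₃ j < τ₃ i := lt_of_le_of_ne (not_lt.mp hn) (fun he => by
      have := τ₃.injective he
      rw [this] at hij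
      exact lt_irrefl _ hij)
    have hl' := k2 _ _ hn' (by rw [← hJ', ← hJ', hb])
    have e1 := congrArg (fun π : Equiv.Perm (Fin n) => π i) e23
    have e2 := congrArg (fun π : Equiv.Perm (Fin n) => π j) e23
    simp only [Equiv.Perm.mul_apply] at e1 e2
    rw [e1, e2] at hl
    omega
  subst e3
  have e2 : σ₂ = τ₂ := mul_right_cancel e23
  subst e2
  have e1 : σ₁ = τ₁ := by
    rw [← k0] at h0
    exact mul_right_cancel (mul_right_cancel h0)
  subst e1
  rfl

lemma exists_TP {n : ℕ} {I J K : Finset ℕ} (t : TW n I J K) (ht : Monotone (lexKey t.1)) :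
    ∃ s : TP n I J K, TPtoTW s = t := by
  obtain ⟨⟨c, b, a⟩, hc, hb, ha⟩ := t
  simp only at hc hb ha ht
  have ma : Monotone a := by
    intro i j hij
    have := ht hij
    simp only [lexKey, Prod.Lex.toLex_le_toLex] at this
    omega
  have ea : a = bw n K := eq_of_monotone_cnt _ _ ma (bw_mono n K) ha
  let f : Fin n → ℕ ×ₗ Fin n := fun x => toLex (c x, x)
  let g : Fin n → ℕ ×ₗ ℕ ×ₗ Fin n := fun x => toLex (b x, toLex (c x, x))
  have hf : Function.Injective f := by
    intro x y h
    simp only [f, toLex_inj, Prod.mk.injEq] at h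
    exact h.2
  have hg : Function.Injective g := by
    intro x y h
    simp only [g, toLex_inj, Prod.mk.injEq] at h
    exact h.2.2
  set p := Tuple.sort f with hp
  set r := Tuple.sort g with hr
  have sf : StrictMono (f ∘ p) := sort_lt f hf
  have sg : StrictMono (g ∘ r) := sort_lt g hg
  have ep : c ∘ p = bw n I := by
    apply eq_of_monotone_cnt _ _ _ (bw_mono n I) (by rw [cnt_comp]; exact hc)
    intro i j hij
    have := sf.monotone hij
    simp only [f, Function.comp_apply, Prod.Lex.toLex_le_toLex] at this
    simp only [Function.comp_apply]
    omega
  have er : b ∘ r = bw n J := by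
    apply eq_of_monotone_cnt _ _ _ (bw_mono n J) (by rw [cnt_comp]; exact hb)
    intro i j hij
    have := sg.monotone hij
    simp only [g, Function.comp_apply, Prod.Lex.toLex_le_toLex] at this
    simp only [Function.comp_apply]
    omega
  refine ⟨⟨(p, p⁻¹ * r, r⁻¹), by simp, ?_, ?_, ?_⟩, ?_⟩
  · rw [permDes_subset_iff]
    intro i j hij h
    have := sf hij
    rw [← ep] at h
    simp only [Function.comp_apply, f, Prod.Lex.toLex_lt_toLex] at this h
    rcases this with h' | h'
    · omega
    · exact h'.2
  · rw [permDes_subset_iff]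
    intro i j hij h
    have := sg hij
    rw [← er] at h
    simp only [Function.comp_apply, g, Prod.Lex.toLex_lt_toLex] at this h
    simp only [Equiv.Perm.mul_apply]
    apply sort_symm_lt f hf
    simp only [f, Prod.Lex.toLex_lt_toLex]
    rcases this with h' | h'
    · omega
    · exact h'.2
  · rw [permDes_subset_iff]
    intro i j hij h
    rw [← ea] at h
    apply sort_symm_lt g hg
    have := ht hij.le
    simp only [lexKey, Prod.Lex.toLex_le_toLex] at this
    simp only [g, Prod.Lex.toLex_lt_toLex]
    omega
  · apply Subtype.ext
    simp only [TPtoTW, Prod.mk.injEq]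
    refine ⟨?_, ?_, ea.symm⟩
    · rw [← ep]; ext x; simp
    · rw [← er]; ext x; simp

lemma lexKey_smul {n : ℕ} {I J K : Finset ℕ} (g : Equiv.Perm (Fin n)) (t : TW n I J K) :
    lexKey (g • t).1 = lexKey t.1 ∘ (g⁻¹ : Equiv.Perm (Fin n)) := rfl

lemma TP_bij (n : ℕ) (I J K : Finset ℕ) : Function.Bijective
    (fun t : TP n I J K => (Quotient.mk _ (TPtoTW t) :
      MulAction.orbitRel.Quotient (Equiv.Perm (Fin n)) (TW n I J K))) := by
  constructor
  · intro s t h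
    have h' := Quotient.exact h
    obtain ⟨g, hg⟩ := h'
    simp only at hg
    apply TPtoTW_inj
    apply Subtype.ext
    apply lexKey_inj
    have m1 := TPtoTW_sorted s
    have m2 := TPtoTW_sorted t
    have := Tuple.unique_monotone (f := lexKey (TPtoTW t).1) (σ := g⁻¹) (τ := 1)
      (by rw [← lexKey_smul, hg]; exact m1) (by simpa using m2)
    rw [← lexKey_smul, hg] at this
    rw [this]; rfl
  · intro q
    induction q using Quotient.inductionOn with
    | _ t =>
    have hm := Tuple.monotone_sort (lexKey t.1)
    obtain ⟨s, hs⟩ := exists_TP ((Tuple.sort (lexKey t.1))⁻¹ • t) (by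
      rw [lexKey_smul, inv_inv]; exact hm)
    refine ⟨s, ?_⟩
    apply Quotient.sound
    rw [hs]
    exact ⟨_, rfl⟩

/-- Words with prescribed content fixed by a permutation. -/
def FW (n : ℕ) (I : Finset ℕ) (σ : Equiv.Perm (Fin n)) : Type :=
  {w : Fin n → ℕ // w ∘ σ = w ∧ cnt w = cnt (bw n I)}

instance FW_finite (n : ℕ) (I : Finset ℕ) (σ : Equiv.Perm (Fin n)) : Finite (FW n I σ) := by
  apply Finite.of_injective (β := Equiv.Perm (Fin n))
    (fun w => (exists_perm_of_cnt_eq _ _ w.2.2).choose)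
  intro w v h
  apply Subtype.ext
  rw [(exists_perm_of_cnt_eq _ _ w.2.2).choose_spec, (exists_perm_of_cnt_eq _ _ v.2.2).choose_spec]
  simp only at h
  rw [h]

lemma comp_inv_eq_iff {n : ℕ} (σ : Equiv.Perm (Fin n)) (w : Fin n → ℕ) :
    w ∘ (σ⁻¹ : Equiv.Perm (Fin n)) = w ↔ w ∘ σ = w := by
  constructor
  · intro h
    conv_lhs => rw [← h]
    ext x; simp
  · intro h
    conv_lhs => rw [← h]
    ext x; simp

/-- Fixed points of the action on triples. -/
def fixedEquiv {n : ℕ} {I J K : Finset ℕ} (σ : Equiv.Perm (Fin n)) :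
    MulAction.fixedBy (TW n I J K) σ ≃ FW n I σ × FW n J σ × FW n K σ where
  toFun t := by
    have h : (σ • t.1).1 = (t.1.1.1, t.1.1.2.1, t.1.1.2.2) := congrArg Subtype.val t.2
    rw [TW_smul] at h
    simp only [Prod.mk.injEq, comp_inv_eq_iff] at h
    exact (⟨t.1.1.1, h.1, t.1.2.1⟩, ⟨t.1.1.2.1, h.2.1, t.1.2.2.1⟩, ⟨t.1.1.2.2, h.2.2, t.1.2.2.2⟩)
  invFun w := ⟨⟨(w.1.1, w.2.1.1, w.2.2.1), w.1.2.2, w.2.1.2.2, w.2.2.2.2⟩, by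
    apply Subtype.ext
    change (_, _, _) = (_, _, _)
    simp only [Prod.mk.injEq, comp_inv_eq_iff]
    exact ⟨w.1.2.1, w.2.1.2.1, w.2.2.2.1⟩⟩
  left_inv t := rfl
  right_inv w := rfl

lemma burnside (n : ℕ) (I J K : Finset ℕ) :
    ∑ σ : Equiv.Perm (Fin n), Nat.card (FW n I σ) * Nat.card (FW n J σ) * Nat.card (FW n K σ)
      = Nat.card (TP n I J K) * n.factorial := by
  have : Finite (TP n I J K) := Subtype.finite
  let e := Equiv.ofBijective _ (TP_bij n I J K)
  have : Finite (MulAction.orbitRel.Quotient (Equiv.Perm (Fin n)) (TW n I J K)) :=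
    Finite.of_equiv _ e
  have : ∀ σ : Equiv.Perm (Fin n), Finite (MulAction.fixedBy (TW n I J K) σ) := fun σ =>
    Finite.of_equiv _ (fixedEquiv σ).symm
  let := Fintype.ofFinite (MulAction.orbitRel.Quotient (Equiv.Perm (Fin n)) (TW n I J K))
  let := fun σ : Equiv.Perm (Fin n) => Fintype.ofFinite (MulAction.fixedBy (TW n I J K) σ)
  have h := MulAction.sum_card_fixedBy_eq_card_orbits_mul_card_group (Equiv.Perm (Fin n))
    (TW n I J K)
  rw [Fintype.card_perm, Fintype.card_fin, ← Nat.card_eq_fintype_card, ← Nat.card_congr e] at h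
  rw [← h]
  apply Finset.sum_congr rfl
  intro σ _
  rw [← Nat.card_eq_fintype_card, Nat.card_congr (fixedEquiv σ), Nat.card_prod, Nat.card_prod,
    mul_assoc]

/-! ### Coefficients of power sum products -/

lemma coeff_psum_prod {ι : Type} [Fintype ι] (k : ι → ℕ) (hk : ∀ i, 0 < k i) (d : ℕ →₀ ℕ) :
    MvPowerSeries.coeff d (∏ i, psum (k i)) =
      (Nat.card {c : ι → ℕ // ∑ i, Finsupp.single (c i) (k i) = d} : ℂ) := by
  rw [MvPowerSeries.coeff_prod]
  have h1 : ∀ l : ι →₀ (ℕ →₀ ℕ), ∏ i, MvPowerSeries.coeff (l i) (psum (k i)) =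
      if (∀ i, ∃ j, l i = Finsupp.single j (k i)) then (1 : ℂ) else 0 := by
    intro l
    have : ∀ i, MvPowerSeries.coeff (l i) (psum (k i)) =
      if (∃ j, l i = Finsupp.single j (k i)) then (1 : ℂ) else 0 := fun i => rfl
    simp only [this]
    rw [Finset.prod_ite_zero]
    simp
  simp only [h1]
  rw [Finset.sum_boole]
  congr 1
  rw [← Nat.card_eq_finsetCard]
  symm
  apply Nat.card_eq_of_bijective (fun c => ⟨Finsupp.equivFunOnFinite.symm
    (fun i => Finsupp.single (c.1 i) (k i)), by
      simp only [Finset.mem_filter, Finset.mem_finsuppAntidiag]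
      exact ⟨⟨by simpa using c.2, Finset.subset_univ _⟩, fun i => ⟨c.1 i, rfl⟩⟩⟩)
  constructor
  · intro c e h
    apply Subtype.ext
    funext i
    have h2 := DFunLike.congr_fun (congrArg Subtype.val h) i
    simp only [Finsupp.equivFunOnFinite_symm_apply_apply] at h2
    exact (Finsupp.single_left_inj (hk i).ne').1 h2
  · rintro ⟨l, hl⟩
    have hl' := hl
    simp only [Finset.mem_filter, Finset.mem_finsuppAntidiag] at hl'
    obtain ⟨⟨h2, _⟩, h3⟩ := hl'
    choose c hc using h3
    refine ⟨⟨c, ?_⟩, ?_⟩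
    · rw [← h2]
      exact Finset.sum_congr rfl fun i _ => (hc i).symm
    · apply Subtype.ext
      ext1 i
      simp [hc]

lemma comp_zpow_eq {n : ℕ} (σ : Equiv.Perm (Fin n)) (w : Fin n → ℕ) (h : w ∘ σ = w)
    {x y : Fin n} (hxy : σ.SameCycle x y) : w x = w y := by
  obtain ⟨i, hi⟩ := hxy.exists_nat_pow_eq
  rw [← hi]
  clear hi hxy
  induction i with
  | zero => rfl
  | succ i ih =>
    rw [pow_succ', Equiv.Perm.mul_apply, ih]
    exact (congrFun h _).symm

/-- Index type for the cycles of a permutation, fixed points included. -/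
abbrev Cyc {n : ℕ} (σ : Equiv.Perm (Fin n)) : Type :=
  {c // c ∈ σ.cycleFactorsFinset} ⊕ {x // σ x = x}

/-- Lengths of the cycles. -/
def cycLen {n : ℕ} (σ : Equiv.Perm (Fin n)) : Cyc σ → ℕ :=
  Sum.elim (fun c => c.1.support.card) (fun _ => 1)

/-- The cycle of a point. -/
def cycMap {n : ℕ} (σ : Equiv.Perm (Fin n)) (x : Fin n) : Cyc σ :=
  if h : σ x = x then Sum.inr ⟨x, h⟩ else
    Sum.inl ⟨σ.cycleOf x, Equiv.Perm.cycleOf_mem_cycleFactorsFinset_iff.2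
      (Equiv.Perm.mem_support.2 h)⟩

lemma cycMap_same {n : ℕ} (σ : Equiv.Perm (Fin n)) {x y : Fin n} (h : cycMap σ x = cycMap σ y) :
    σ.SameCycle x y := by
  unfold cycMap at h
  split_ifs at h with h1 h2 h2
  · simp only [Sum.inr.injEq, Subtype.mk.injEq] at h
    rw [h]
  · simp only [Sum.inl.injEq, Subtype.mk.injEq] at h
    have : y ∈ (σ.cycleOf y).support := by
      rw [Equiv.Perm.mem_support, Equiv.Perm.cycleOf_apply_self]; exact h2
    rw [← h] at this
    exact (Equiv.Perm.mem_support_cycleOf_iff.1 this).1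

lemma cycMap_fiber {n : ℕ} (σ : Equiv.Perm (Fin n)) (q : Cyc σ) :
    (Finset.univ.filter fun x => cycMap σ x = q).card = cycLen σ q := by
  rcases q with c | x
  · simp only [cycLen, Sum.elim_inl]
    congr 1
    ext x
    simp only [Finset.mem_filter, Finset.mem_univ, true_and]
    unfold cycMap
    split_ifs with h
    · simp only [reduceCtorEq, false_iff]
      intro hx
      exact Equiv.Perm.mem_support.1 (Equiv.Perm.mem_cycleFactorsFinset_support_le c.2 hx) h
    · simp only [Sum.inl.injEq]
      constructor
      · intro hx
        rw [← hx]
        rw [Equiv.Perm.mem_support, Equiv.Perm.cycleOf_apply_self]; exact h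
      · intro hx
        exact Subtype.ext (Equiv.Perm.cycle_is_cycleOf hx c.2).symm
  · simp only [cycLen, Sum.elim_inr]
    rw [Finset.card_eq_one]
    refine ⟨x.1, ?_⟩
    ext y
    simp only [Finset.mem_filter, Finset.mem_univ, true_and, Finset.mem_singleton]
    unfold cycMap
    split_ifs with h
    · simp only [Sum.inr.injEq]
      exact Subtype.ext_iff
    · simp only [reduceCtorEq, false_iff]
      rintro rfl
      exact h x.2

lemma cycLen_pos {n : ℕ} (σ : Equiv.Perm (Fin n)) (q : Cyc σ) : 0 < cycLen σ q := by
  rcases q with c | x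
  · simp only [cycLen, Sum.elim_inl]
    exact (Nat.zero_lt_two.trans_le
      (Equiv.Perm.mem_cycleFactorsFinset_iff.1 c.2).1.two_le_card_support)
  · simp [cycLen]

lemma cycMap_surj {n : ℕ} (σ : Equiv.Perm (Fin n)) : Function.Surjective (cycMap σ) := by
  intro q
  have h := cycLen_pos σ q
  rw [← cycMap_fiber, Finset.card_pos] at h
  obtain ⟨x, hx⟩ := h
  exact ⟨x, by simpa using hx⟩

lemma cycMap_apply {n : ℕ} (σ : Equiv.Perm (Fin n)) (x : Fin n) : cycMap σ (σ x) = cycMap σ x := by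
  by_cases h : σ x = x
  · rw [h]
  · have h2 : ¬ σ (σ x) = σ x := fun h' => h (σ.injective h')
    simp [cycMap, h]

lemma pProd_eq {n : ℕ} (σ : Equiv.Perm (Fin n)) :
    pProd (fullCycleType σ) = ∏ q : Cyc σ, psum (cycLen σ q) := by
  rw [Fintype.prod_sum_type]
  simp only [cycLen, Sum.elim_inl, Sum.elim_inr]
  unfold pProd fullCycleType
  rw [Multiset.map_add, Multiset.prod_add, Equiv.Perm.sum_cycleType]
  congr 1
  · rw [Equiv.Perm.cycleType_def, Multiset.map_map]
    rw [Finset.univ_eq_attach, Finset.prod_attach σ.cycleFactorsFinset (fun c => psum c.support.card)]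
    rfl
  · simp only [Multiset.map_replicate, Multiset.prod_replicate, Finset.prod_const, Finset.card_univ]
    congr 1
    rw [Fintype.card_subtype]
    have h := Finset.card_compl σ.support
    rw [Fintype.card_fin] at h
    rw [← h]
    congr 1
    ext x
    simp

lemma cnt_comp_cycMap {n : ℕ} (σ : Equiv.Perm (Fin n)) (c : Cyc σ → ℕ) :
    cnt (c ∘ cycMap σ) = ∑ i, Finsupp.single (c i) (cycLen σ i) := by
  unfold cnt
  rw [← Finset.sum_fiberwise_of_maps_to (s := Finset.univ) (t := Finset.univ) (g := cycMap σ)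
    (fun _ _ => Finset.mem_univ _)]
  apply Finset.sum_congr rfl
  intro i _
  rw [Finset.sum_congr rfl (g := fun _ => Finsupp.single (c i) 1)]
  · rw [Finset.sum_const, cycMap_fiber]
    simp
  · intro x hx
    simp only [Finset.mem_filter, Finset.mem_univ, true_and] at hx
    simp [hx]

lemma coeff_pProd {n : ℕ} (σ : Equiv.Perm (Fin n)) (I : Finset ℕ) :
    MvPowerSeries.coeff (cnt (bw n I)) (pProd (fullCycleType σ)) = (Nat.card (FW n I σ) : ℂ) := by
  rw [pProd_eq, coeff_psum_prod _ (cycLen_pos σ)]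
  congr 1
  apply Nat.card_eq_of_bijective (fun c => (⟨c.1 ∘ cycMap σ, by
      ext x; simp [cycMap_apply], by rw [cnt_comp_cycMap]; exact c.2⟩ : FW n I σ))
  constructor
  · intro c e h
    apply Subtype.ext
    have := congrArg Subtype.val h
    exact (cycMap_surj σ).injective_comp_right this
  · rintro ⟨w, hw, hd⟩
    have hfac : w = (w ∘ Function.surjInv (cycMap_surj σ)) ∘ cycMap σ := by
      ext x
      apply comp_zpow_eq σ w hw
      apply cycMap_same
      simp [Function.surjInv_eq]
    refine ⟨⟨w ∘ Function.surjInv (cycMap_surj σ), ?_⟩, ?_⟩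
    · rw [← cnt_comp_cycMap, ← hfac, hd]
    · apply Subtype.ext
      exact hfac.symm

/-! ### Standardization of tableaux -/

lemma card_subset_eq_sum {α : Type*} (P : α → Prop) [Finite {x // P x}] (f : α → Finset ℕ)
    (I : Finset ℕ) :
    Nat.card {x // P x ∧ f x ⊆ I} = ∑ I' ∈ I.powerset, Nat.card {x // P x ∧ f x = I'} := by
  have fin : ∀ I', Finite {x // P x ∧ f x = I'} := fun I' =>
    Finite.of_injective (β := {x // P x}) (fun x => ⟨x.1, x.2.1⟩) (fun x y h => by
      apply Subtype.ext; simpa using h)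
  let e : {x // P x ∧ f x ⊆ I} ≃ Σ I' : {I' // I' ∈ I.powerset}, {x // P x ∧ f x = I'.1} :=
    { toFun := fun x => ⟨⟨f x.1, Finset.mem_powerset.2 x.2.2⟩, ⟨x.1, x.2.1, rfl⟩⟩
      invFun := fun y => ⟨y.2.1, y.2.2.1, by rw [y.2.2.2]; exact Finset.mem_powerset.1 y.1.2⟩
      left_inv := fun x => rfl
      right_inv := by
        rintro ⟨⟨I', h⟩, ⟨x, hx, h2⟩⟩
        change f x = I' at h2
        subst h2
        rfl }
  rw [Nat.card_congr e, Nat.card_sigma, Finset.univ_eq_attach,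
    Finset.sum_attach I.powerset (fun I' => Nat.card {x // P x ∧ f x = I'})]

section Tableaux

variable {μ : YoungDiagram} {n : ℕ}

lemma ssyt_mono (T : SemistandardYoungTableau μ) {c c' : ℕ × ℕ} (hc : c ∈ μ.cells)
    (h1 : c'.1 ≤ c.1) (h2 : c'.2 ≤ c.2) : T c'.1 c'.2 ≤ T c.1 c.2 := by
  have hc' : (c.1, c.2) ∈ μ := hc
  exact (T.row_weak_of_le h2 (μ.up_left_mem h1 le_rfl hc')).trans (T.col_weak h1 hc')

lemma std_image (hμ : μ.cells.card = n) (T : SemistandardYoungTableau μ) (hT : IsStdYT n T) :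
    μ.cells.image (fun c => T c.1 c.2) = Finset.Icc 1 n ∧
      Set.InjOn (fun c : ℕ × ℕ => T c.1 c.2) μ.cells := by
  have hsub : Finset.Icc 1 n ⊆ μ.cells.image (fun c => T c.1 c.2) := by
    intro k hk
    obtain ⟨c, hc⟩ := Finset.card_eq_one.1 (hT k hk)
    have : c ∈ μ.cells.filter fun c => T c.1 c.2 = k := by rw [hc]; simp
    rw [Finset.mem_filter] at this
    exact Finset.mem_image.2 ⟨c, this.1, this.2⟩
  have hcard : (μ.cells.image (fun c => T c.1 c.2)).card ≤ μ.cells.card := Finset.card_image_le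
  have heq := Finset.eq_of_subset_of_card_le hsub (by simpa [hμ] using hcard)
  refine ⟨heq.symm, ?_⟩
  rw [← Finset.card_image_iff, ← heq, hμ]
  simp

lemma std_mem (hμ : μ.cells.card = n) (T : SemistandardYoungTableau μ) (hT : IsStdYT n T)
    {c : ℕ × ℕ} (hc : c ∈ μ.cells) : 1 ≤ T c.1 c.2 ∧ T c.1 c.2 ≤ n := by
  have := Finset.mem_image_of_mem (fun c : ℕ × ℕ => T c.1 c.2) hc
  rw [(std_image hμ T hT).1, Finset.mem_Icc] at this
  exact this

lemma std_surj (hμ : μ.cells.card = n) (T : SemistandardYoungTableau μ) (hT : IsStdYT n T)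
    {k : ℕ} (h1 : 1 ≤ k) (h2 : k ≤ n) : ∃ c ∈ μ.cells, T c.1 c.2 = k := by
  have : k ∈ μ.cells.image (fun c => T c.1 c.2) := by
    rw [(std_image hμ T hT).1, Finset.mem_Icc]; exact ⟨h1, h2⟩
  simpa only [Finset.mem_image] using this

lemma std_inj (hμ : μ.cells.card = n) (T : SemistandardYoungTableau μ) (hT : IsStdYT n T)
    {c c' : ℕ × ℕ} (hc : c ∈ μ.cells) (hc' : c' ∈ μ.cells) (h : T c.1 c.2 = T c'.1 c'.2) :
    c = c' :=
  (std_image hμ T hT).2 hc hc' h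

lemma std_block_row (hμ : μ.cells.card = n) (T : SemistandardYoungTableau μ) (hT : IsStdYT n T)
    {I : Finset ℕ} (hI : sytDes n T ⊆ I) (d : ℕ) : ∀ {c c' : ℕ × ℕ}, c ∈ μ.cells → c' ∈ μ.cells →
    T c'.1 c'.2 = T c.1 c.2 + d → bl I (T c.1 c.2) = bl I (T c'.1 c'.2) → c'.1 ≤ c.1 := by
  induction d with
  | zero =>
    intro c c' hc hc' h _
    rw [std_inj hμ T hT hc' hc h]
  | succ d ih =>
    intro c c' hc hc' h hb
    have m1 := std_mem hμ T hT hc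
    have m2 := std_mem hμ T hT hc'
    obtain ⟨e, he, hek⟩ := std_surj hμ T hT (k := T c.1 c.2 + d) (by omega) (by omega)
    have b1 : bl I (T c.1 c.2) ≤ bl I (T e.1 e.2) := bl_mono I (by omega)
    have b2 : bl I (T e.1 e.2) ≤ bl I (T c'.1 c'.2) := bl_mono I (by omega)
    have h1 := ih hc he hek (by omega)
    refine le_trans ?_ h1
    by_contra hlt
    have hmem : T e.1 e.2 ∈ sytDes n T := by
      simp only [sytDes, Finset.mem_filter, Finset.mem_Icc]
      exact ⟨⟨by omega, by omega⟩, e, he, c', hc', rfl, by omega, by omega⟩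
    exact (bl_eq_of_forall I (a := T e.1 e.2) (b := T c'.1 c'.2) (by omega)).1 (by omega) _ le_rfl
      (by omega) (hI hmem)

lemma std_block_col (hμ : μ.cells.card = n) (T : SemistandardYoungTableau μ) (hT : IsStdYT n T)
    {I : Finset ℕ} (hI : sytDes n T ⊆ I) {c c' : ℕ × ℕ} (hc : c ∈ μ.cells) (hc' : c' ∈ μ.cells)
    (h : T c.1 c.2 < T c'.1 c'.2) (hb : bl I (T c.1 c.2) = bl I (T c'.1 c'.2)) :
    c'.1 ≤ c.1 ∧ c.2 < c'.2 := by
  have h1 := std_block_row hμ T hT hI (T c'.1 c'.2 - T c.1 c.2) hc hc' (by omega) hb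
  refine ⟨h1, ?_⟩
  by_contra h2
  have := ssyt_mono T hc h1 (not_lt.1 h2)
  omega

/-- Destandardization of a standard tableau. -/
def destd (hμ : μ.cells.card = n) (I : Finset ℕ)
    (T : {T : SemistandardYoungTableau μ // IsStdYT n T ∧ sytDes n T ⊆ I}) :
    SemistandardYoungTableau μ where
  entry i j := bl I (T.1 i j)
  row_weak' hj hc := bl_mono I (T.1.row_weak hj hc)
  col_strict' := by
    intro i1 i2 j hi hc
    have h1 := T.1.col_strict hi hc
    apply lt_of_le_of_ne (bl_mono I h1.le)
    intro hb
    have hc1 : (i1, j) ∈ μ := μ.up_left_mem hi.le le_rfl hc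
    have := (std_block_col hμ T.1 T.2.1 T.2.2 (c := (i1, j)) (c' := (i2, j)) hc1 hc h1 hb).1
    simp only at this
    omega
  zeros' hc := by rw [T.1.zeros hc, bl_zero]

lemma destd_apply (hμ : μ.cells.card = n) (I : Finset ℕ)
    (T : {T : SemistandardYoungTableau μ // IsStdYT n T ∧ sytDes n T ⊆ I}) (i j : ℕ) :
    destd hμ I T i j = bl I (T.1 i j) := rfl

lemma destd_weight (hμ : μ.cells.card = n) (I : Finset ℕ)
    (T : {T : SemistandardYoungTableau μ // IsStdYT n T ∧ sytDes n T ⊆ I}) (j : ℕ) :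
    ssytWeight (destd hμ I T) j = cnt (bw n I) j := by
  rw [cnt_apply]
  unfold ssytWeight
  have hm := fun {c} hc => std_mem hμ T.1 T.2.1 (c := c) hc
  refine Finset.card_bij (fun c hc => (⟨T.1 c.1 c.2 - 1, by
    have := hm (Finset.mem_filter.1 hc).1; omega⟩ : Fin n)) ?_ ?_ ?_
  · intro c hc
    have h1 := hm (Finset.mem_filter.1 hc).1
    have h2 := (Finset.mem_filter.1 hc).2
    rw [destd_apply] at h2
    rw [Finset.mem_filter]
    refine ⟨Finset.mem_univ _, Eq.trans ?_ h2⟩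
    unfold bw
    congr 1
    simp only
    omega
  · intro c hc c' hc' h
    have h1 := hm (Finset.mem_filter.1 hc).1
    have h2 := hm (Finset.mem_filter.1 hc').1
    simp only [Fin.mk.injEq] at h
    exact std_inj hμ T.1 T.2.1 (Finset.mem_filter.1 hc).1 (Finset.mem_filter.1 hc').1 (by omega)
  · intro i hi
    obtain ⟨c, hc, hk⟩ := std_surj hμ T.1 T.2.1 (k := i + 1) (by omega) (by omega)
    have hi' : bl I (i + 1) = j := (Finset.mem_filter.1 hi).2
    refine ⟨c, Finset.mem_filter.2 ⟨hc, ?_⟩, ?_⟩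
    · rw [destd_apply, hk, hi']
    · apply Fin.ext; simp [hk]

lemma std_rank (hμ : μ.cells.card = n) (T : SemistandardYoungTableau μ) (hT : IsStdYT n T)
    {c : ℕ × ℕ} (hc : c ∈ μ.cells) :
    T c.1 c.2 = (μ.cells.filter fun e => T e.1 e.2 ≤ T c.1 c.2).card := by
  have hinj := (std_image hμ T hT).2
  rw [← Finset.card_image_of_injOn (f := fun e : ℕ × ℕ => T e.1 e.2)
    (hinj.mono (by intro x hx; exact Finset.mem_coe.2 (Finset.mem_filter.1 (Finset.mem_coe.1 hx)).1))]
  have : (μ.cells.filter fun e => T e.1 e.2 ≤ T c.1 c.2).image (fun e : ℕ × ℕ => T e.1 e.2)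
      = Finset.Icc 1 (T c.1 c.2) := by
    ext k
    simp only [Finset.mem_image, Finset.mem_filter, Finset.mem_Icc]
    constructor
    · rintro ⟨e, ⟨he, h1⟩, rfl⟩
      exact ⟨(std_mem hμ T hT he).1, h1⟩
    · rintro ⟨h1, h2⟩
      obtain ⟨e, he, hk⟩ := std_surj hμ T hT h1 (h2.trans (std_mem hμ T hT hc).2)
      exact ⟨e, ⟨he, by omega⟩, hk⟩
  rw [this]
  simp

lemma destd_inj (hμ : μ.cells.card = n) (I : Finset ℕ) : Function.Injective (destd hμ I) := by
  have key : ∀ T T' : {T : SemistandardYoungTableau μ // IsStdYT n T ∧ sytDes n T ⊆ I},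
      destd hμ I T = destd hμ I T' → ∀ c ∈ μ.cells, ∀ c' ∈ μ.cells,
      T.1 c.1 c.2 < T.1 c'.1 c'.2 → T'.1 c.1 c.2 < T'.1 c'.1 c'.2 := by
    intro T T' h c hc c' hc' hlt
    have hd : ∀ i j, bl I (T.1 i j) = bl I (T'.1 i j) := fun i j => by
      rw [← destd_apply hμ, h, destd_apply]
    by_contra hn
    have hn' : T'.1 c'.1 c'.2 < T'.1 c.1 c.2 := by
      apply lt_of_le_of_ne (not_lt.1 hn)
      intro he
      have := std_inj hμ T'.1 T'.2.1 hc' hc he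
      rw [this] at hlt
      omega
    have b1 := bl_mono I hlt.le
    have b2 := bl_mono I hn'.le
    rw [← hd, ← hd] at b2
    have a1 := std_block_col hμ T.1 T.2.1 T.2.2 hc hc' hlt (by omega)
    have a2 := std_block_col hμ T'.1 T'.2.1 T'.2.2 hc' hc hn' (by rw [← hd, ← hd]; omega)
    omega
  intro T T' h
  apply Subtype.ext
  apply SemistandardYoungTableau.ext
  intro i j
  by_cases hc : (i, j) ∈ μ
  · have hc' : (i, j) ∈ μ.cells := hc
    have r1 := std_rank hμ T.1 T.2.1 hc'
    have r2 := std_rank hμ T'.1 T'.2.1 hc'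
    simp only at r1 r2
    rw [r1, r2]
    congr 1
    apply Finset.filter_congr
    intro e he
    constructor
    · intro h1
      by_contra h2
      exact absurd (key T' T h.symm _ hc' _ he (not_le.1 h2)) (not_lt.2 h1)
    · intro h1
      by_contra h2
      exact absurd (key T T' h _ hc' _ he (not_le.1 h2)) (not_lt.2 h1)
  · rw [T.1.zeros hc, T'.1.zeros hc]

/-- The key used to standardize a tableau. -/
def ykey (S : SemistandardYoungTableau μ) (c : ℕ × ℕ) : ℕ ×ₗ ℕ := toLex (S c.1 c.2, c.2)

lemma ykey_inj (S : SemistandardYoungTableau μ) {c c' : ℕ × ℕ} (hc : c ∈ μ.cells)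
    (hc' : c' ∈ μ.cells) (h : ykey S c = ykey S c') : c = c' := by
  obtain ⟨i, j⟩ := c
  obtain ⟨i', j'⟩ := c'
  simp only [ykey, toLex_inj, Prod.mk.injEq] at h
  obtain ⟨h1, rfl⟩ := h
  rcases lt_trichotomy i i' with h | h | h
  · have := S.col_strict h hc'; omega
  · rw [h]
  · have := S.col_strict h hc; omega

/-- The rank of a cell. -/
def yrank (S : SemistandardYoungTableau μ) (c : ℕ × ℕ) : ℕ :=
  (μ.cells.filter fun e => ykey S e ≤ ykey S c).card

lemma yrank_mono (S : SemistandardYoungTableau μ) {c c' : ℕ × ℕ} (h : ykey S c ≤ ykey S c') :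
    yrank S c ≤ yrank S c' := by
  apply Finset.card_le_card
  intro e he
  rw [Finset.mem_filter] at he ⊢
  exact ⟨he.1, he.2.trans h⟩

lemma yrank_strict (S : SemistandardYoungTableau μ) {c c' : ℕ × ℕ} (hc' : c' ∈ μ.cells)
    (h : ykey S c < ykey S c') : yrank S c < yrank S c' := by
  apply Finset.card_lt_card
  rw [Finset.ssubset_iff_of_subset]
  · exact ⟨c', Finset.mem_filter.2 ⟨hc', le_rfl⟩, fun h2 =>
      absurd (Finset.mem_filter.1 h2).2 (not_le.2 h)⟩
  · intro e he
    rw [Finset.mem_filter] at he ⊢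
    exact ⟨he.1, he.2.trans h.le⟩

lemma yrank_pos (S : SemistandardYoungTableau μ) {c : ℕ × ℕ} (hc : c ∈ μ.cells) :
    1 ≤ yrank S c :=
  Finset.card_pos.2 ⟨c, Finset.mem_filter.2 ⟨hc, le_rfl⟩⟩

lemma yrank_le (hμ : μ.cells.card = n) (S : SemistandardYoungTableau μ) (c : ℕ × ℕ) :
    yrank S c ≤ n := by
  rw [← hμ]
  exact Finset.card_le_card (Finset.filter_subset _ _)

lemma yrank_inj (S : SemistandardYoungTableau μ) {c c' : ℕ × ℕ} (hc : c ∈ μ.cells)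
    (hc' : c' ∈ μ.cells) (h : yrank S c = yrank S c') : c = c' := by
  rcases lt_trichotomy (ykey S c) (ykey S c') with h1 | h1 | h1
  · have := yrank_strict S hc' h1; omega
  · exact ykey_inj S hc hc' h1
  · have := yrank_strict S hc h1; omega

lemma card_le_weight (S : SemistandardYoungTableau μ) (I : Finset ℕ)
    (hS : ∀ j, ssytWeight S j = cnt (bw n I) j) (j : ℕ) :
    (μ.cells.filter fun e => S e.1 e.2 ≤ j).card
      = (Finset.univ.filter fun i : Fin n => bw n I i ≤ j).card := by
  induction j with
  | zero =>
    have := hS 0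
    rw [cnt_apply] at this
    simpa [ssytWeight] using this
  | succ j ih =>
    have h1 : (μ.cells.filter fun e => S e.1 e.2 ≤ j + 1)
        = (μ.cells.filter fun e => S e.1 e.2 ≤ j) ∪ (μ.cells.filter fun e => S e.1 e.2 = j + 1) := by
      rw [← Finset.filter_or]
      apply Finset.filter_congr
      intro e _
      omega
    have h2 : (Finset.univ.filter fun i : Fin n => bw n I i ≤ j + 1)
        = (Finset.univ.filter fun i : Fin n => bw n I i ≤ j) ∪
          (Finset.univ.filter fun i : Fin n => bw n I i = j + 1) := by
      rw [← Finset.filter_or]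
      apply Finset.filter_congr
      intro e _
      omega
    rw [h1, h2, Finset.card_union_of_disjoint, Finset.card_union_of_disjoint, ih]
    · congr 1
      have := hS (j + 1)
      rwa [cnt_apply] at this
    · rw [Finset.disjoint_filter]; intro e _ h; omega
    · rw [Finset.disjoint_filter]; intro e _ h; omega

lemma bl_yrank (hμ : μ.cells.card = n) (S : SemistandardYoungTableau μ) (I : Finset ℕ)
    (hS : ∀ j, ssytWeight S j = cnt (bw n I) j) {c : ℕ × ℕ} (hc : c ∈ μ.cells) :
    bl I (yrank S c) = S c.1 c.2 := by
  have hp := yrank_pos S hc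
  have hl := yrank_le hμ S c
  have key : ∀ j, S c.1 c.2 ≤ j ↔ bl I (yrank S c) ≤ j := by
    intro j
    have h1 : bl I (yrank S c) ≤ j ↔
        yrank S c ≤ (Finset.univ.filter fun i : Fin n => bw n I i ≤ j).card := by
      have h := Tuple.lt_card_le_iff_apply_le_of_monotone (f := bw n I) (a := j)
        (j := ⟨yrank S c - 1, by omega⟩) (bw_mono n I)
      have e : bw n I ⟨yrank S c - 1, by omega⟩ = bl I (yrank S c) := by
        unfold bw; congr 1; simp only; omega
      rw [e] at h
      rw [← h]
      simp only
      constructor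
      · intro h'; convert (show yrank S c ≤ _ from ?_) using 2
        · omega
      · intro h'; omega
    rw [h1, ← card_le_weight S I hS]
    constructor
    · intro h
      apply Finset.card_le_card
      intro e he
      rw [Finset.mem_filter] at he ⊢
      refine ⟨he.1, ?_⟩
      have := he.2
      simp only [ykey, Prod.Lex.toLex_le_toLex] at this
      omega
    · intro h
      by_contra hn
      refine absurd h (not_le.2 ?_)
      apply Finset.card_lt_card
      rw [Finset.ssubset_iff_of_subset]
      · exact ⟨c, Finset.mem_filter.2 ⟨hc, le_rfl⟩, fun h2 => hn (Finset.mem_filter.1 h2).2⟩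
      · intro e he
        rw [Finset.mem_filter] at he ⊢
        refine ⟨he.1, ?_⟩
        simp only [ykey, Prod.Lex.toLex_le_toLex]
        omega
  exact le_antisymm ((key _).1 le_rfl) ((key _).2 le_rfl)

/-- Standardization. -/
def stdz (S : SemistandardYoungTableau μ) : SemistandardYoungTableau μ where
  entry i j := if (i, j) ∈ μ then yrank S (i, j) else 0
  row_weak' := by
    intro i j1 j2 hj hc
    rw [if_pos hc, if_pos (μ.up_left_mem le_rfl hj.le hc)]
    apply yrank_mono
    have := S.row_weak hj hc
    simp only [ykey, Prod.Lex.toLex_le_toLex]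
    omega
  col_strict' := by
    intro i1 i2 j hi hc
    rw [if_pos hc, if_pos (μ.up_left_mem hi.le le_rfl hc)]
    apply yrank_strict S hc
    have := S.col_strict hi hc
    simp only [ykey, Prod.Lex.toLex_lt_toLex]
    omega
  zeros' hc := if_neg hc

lemma stdz_apply (S : SemistandardYoungTableau μ) {c : ℕ × ℕ} (hc : c ∈ μ.cells) :
    stdz S c.1 c.2 = yrank S c := if_pos (show (c.1, c.2) ∈ μ from hc)

lemma stdz_std (hμ : μ.cells.card = n) (S : SemistandardYoungTableau μ) : IsStdYT n (stdz S) := by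
  have himg : μ.cells.image (yrank S) = Finset.Icc 1 n := by
    apply Finset.eq_of_subset_of_card_le
    · intro k hk
      obtain ⟨c, hc, rfl⟩ := Finset.mem_image.1 hk
      exact Finset.mem_Icc.2 ⟨yrank_pos S hc, yrank_le hμ S c⟩
    · rw [Finset.card_image_of_injOn (fun c hc c' hc' h => yrank_inj S hc hc' h), hμ]
      simp
  intro k hk
  rw [← himg] at hk
  obtain ⟨c, hc, rfl⟩ := Finset.mem_image.1 hk
  rw [Finset.card_eq_one]
  refine ⟨c, ?_⟩
  ext e
  simp only [Finset.mem_filter, Finset.mem_singleton]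
  constructor
  · rintro ⟨h1, h2⟩
    rw [stdz_apply S h1] at h2
    exact yrank_inj S h1 hc h2
  · rintro rfl
    exact ⟨hc, stdz_apply S hc⟩

lemma stdz_des (hμ : μ.cells.card = n) (S : SemistandardYoungTableau μ) (I : Finset ℕ)
    (hS : ∀ j, ssytWeight S j = cnt (bw n I) j) : sytDes n (stdz S) ⊆ I := by
  intro k hk
  simp only [sytDes, Finset.mem_filter, Finset.mem_Icc] at hk
  obtain ⟨_, c, hc, c', hc', h1, h2, h3⟩ := hk
  rw [stdz_apply S hc] at h1
  rw [stdz_apply S hc'] at h2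
  by_contra hI
  have hb : bl I k = bl I (k + 1) := (bl_eq_of_forall I (by omega)).2 (by
    intro m hm1 hm2
    have : m = k := by omega
    rwa [this])
  rw [← h2, bl_yrank hμ S I hS hc', ← h1, bl_yrank hμ S I hS hc] at hb
  have hlt : ykey S c < ykey S c' := by
    by_contra hn
    have := yrank_mono S (not_lt.1 hn)
    omega
  simp only [ykey, Prod.Lex.toLex_lt_toLex] at hlt
  have hcm : (c'.1, c'.2) ∈ μ := hc'
  have e1 := S.col_strict h3 hcm
  have e2 := S.row_weak_of_le (i := c.1) (j1 := c.2) (j2 := c'.2) (by omega)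
    (μ.up_left_mem h3.le le_rfl hcm)
  omega

instance std_finite [hμ : Fact (μ.cells.card = n)] :
    Finite {T : SemistandardYoungTableau μ // IsStdYT n T} := by
  apply Finite.of_injective (β := μ.cells → Fin (n + 1))
    (fun T c => ⟨T.1 c.1.1 c.1.2, by have := std_mem hμ.1 T.1 T.2 c.2; omega⟩)
  intro T T' h
  apply Subtype.ext
  apply SemistandardYoungTableau.ext
  intro i j
  by_cases hc : (i, j) ∈ μ
  · have := congrFun h ⟨(i, j), hc⟩
    simpa using this
  · rw [T.1.zeros hc, T'.1.zeros hc]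

lemma kostka_eq (hμ : μ.cells.card = n) (I : Finset ℕ) :
    Nat.card {S : SemistandardYoungTableau μ // ∀ j, ssytWeight S j = cnt (bw n I) j}
      = ∑ I' ∈ I.powerset, dCoef μ n I' := by
  have : Fact (μ.cells.card = n) := ⟨hμ⟩
  unfold dCoef
  rw [← card_subset_eq_sum]
  symm
  apply Nat.card_eq_of_bijective (fun T => ⟨destd hμ I T, destd_weight hμ I T⟩)
  constructor
  · intro T T' h
    exact destd_inj hμ I (congrArg Subtype.val h)
  · rintro ⟨S, hS⟩
    refine ⟨⟨stdz S, stdz_std hμ S, stdz_des hμ S I hS⟩, ?_⟩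
    apply Subtype.ext
    apply SemistandardYoungTableau.ext
    intro i j
    simp only [destd_apply]
    by_cases hc : (i, j) ∈ μ
    · have h1 := stdz_apply S (c := (i, j)) hc
      have h2 := bl_yrank hμ S I hS (c := (i, j)) hc
      simp only at h1 h2
      rw [h1, h2]
    · rw [(stdz S).zeros hc, S.zeros hc, bl_zero]

end Tableaux

lemma sum_card_filter (n : ℕ) (s : Multiset ℕ) (hs : ∀ a ∈ s, a ≤ n) :
    ∑ j ∈ Finset.range n, (s.filter fun a => j < a).card = s.sum := by
  induction s using Multiset.induction_on with
  | empty => simp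
  | cons a s ih =>
    rw [Multiset.sum_cons, ← ih fun b hb => hs b (Multiset.mem_cons_of_mem hb)]
    have h : ∀ j, ((a ::ₘ s).filter fun a => j < a).card
        = (if j < a then 1 else 0) + (s.filter fun a => j < a).card := by
      intro j
      rw [Multiset.filter_cons]
      split_ifs <;> simp [add_comm]
    simp only [h]
    rw [Finset.sum_add_distrib, ← Finset.card_filter]
    congr 1
    have : (Finset.range n).filter (fun j => j < a) = Finset.range a := by
      ext j
      have := hs a (Multiset.mem_cons_self a s)
      simp only [Finset.mem_filter, Finset.mem_range]
      omega
    rw [this, Finset.card_range]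

lemma toYD_card {n : ℕ} (p : n.Partition) : (toYD p).cells.card = n := by
  have hle : ∀ a ∈ p.parts, a ≤ n := fun a ha => by
    have := Multiset.le_sum_of_mem ha
    rwa [p.parts_sum] at this
  have hcard : p.parts.card ≤ n := by
    have := Multiset.card_nsmul_le_sum (s := p.parts) (a := 1) (fun x hx => p.parts_pos hx)
    rwa [p.parts_sum, smul_eq_mul, mul_one] at this
  have h1 : (toYD p).cells.card
      = ∑ j ∈ Finset.range n, (p.parts.filter fun a => j < a).card := by
    unfold toYD
    simp only
    rw [Finset.card_filter, Finset.sum_product_right]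
    apply Finset.sum_congr rfl
    intro j _
    rw [← Finset.card_filter]
    have : (Finset.range n).filter (fun i => i < (p.parts.filter fun a => j < a).card)
        = Finset.range (p.parts.filter fun a => j < a).card := by
      ext i
      have := Multiset.card_le_card (Multiset.filter_le (fun a => j < a) p.parts)
      simp only [Finset.mem_filter, Finset.mem_range]
      omega
    rw [this, Finset.card_range]
  rw [h1, sum_card_filter _ _ hle, p.parts_sum]

/-! ### Assembly -/

lemma eq_of_powerset_sum {M : Type*} [AddCommGroup M] (f g : Finset ℕ → M)
    (h : ∀ I : Finset ℕ, ∑ I' ∈ I.powerset, f I' = ∑ I' ∈ I.powerset, g I') (I : Finset ℕ) :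
    f I = g I := by
  induction I using Finset.strongInduction with
  | H I ih =>
    have h1 := h I
    rw [← Finset.insert_erase (Finset.mem_powerset_self I), Finset.sum_insert (by simp),
      Finset.sum_insert (by simp)] at h1
    rw [Finset.sum_congr rfl (g := g)] at h1
    · exact add_right_cancel h1
    · intro I' hI'
      rw [Finset.mem_erase, Finset.mem_powerset] at hI'
      exact ih I' (Finset.ssubset_iff_subset_ne.2 ⟨hI'.2, hI'.1⟩)

/-- The set of triples with prescribed descent sets. -/
abbrev TE (n : ℕ) (I J K : Finset ℕ) : Type :=
  {t : Equiv.Perm (Fin n) × Equiv.Perm (Fin n) × Equiv.Perm (Fin n) //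
        t.1 * t.2.1 * t.2.2 = 1 ∧ permDes t.1 = I ∧ permDes t.2.1 = J ∧
          permDes t.2.2 = K}

lemma TP_card (n : ℕ) (I J K : Finset ℕ) : Nat.card (TP n I J K) =
    ∑ I' ∈ I.powerset, ∑ J' ∈ J.powerset, ∑ K' ∈ K.powerset, Nat.card (TE n I' J' K') := by
  have a1 : Nat.card (TP n I J K) = Nat.card {t : Equiv.Perm (Fin n) × Equiv.Perm (Fin n) ×
      Equiv.Perm (Fin n) // (t.1 * t.2.1 * t.2.2 = 1 ∧ permDes t.2.1 ⊆ J ∧ permDes t.2.2 ⊆ K)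
      ∧ permDes t.1 ⊆ I} :=
    Nat.card_congr (Equiv.subtypeEquivRight fun t => by tauto)
  rw [a1, card_subset_eq_sum _ (fun t : Equiv.Perm (Fin n) × Equiv.Perm (Fin n) ×
      Equiv.Perm (Fin n) => permDes t.1)]
  apply Finset.sum_congr rfl
  intro I' _
  have a2 : Nat.card {t : Equiv.Perm (Fin n) × Equiv.Perm (Fin n) ×
      Equiv.Perm (Fin n) // (t.1 * t.2.1 * t.2.2 = 1 ∧ permDes t.2.1 ⊆ J ∧ permDes t.2.2 ⊆ K)
      ∧ permDes t.1 = I'} = Nat.card {t : Equiv.Perm (Fin n) × Equiv.Perm (Fin n) ×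
      Equiv.Perm (Fin n) // (t.1 * t.2.1 * t.2.2 = 1 ∧ permDes t.1 = I' ∧ permDes t.2.2 ⊆ K)
      ∧ permDes t.2.1 ⊆ J} :=
    Nat.card_congr (Equiv.subtypeEquivRight fun t => by tauto)
  rw [a2, card_subset_eq_sum _ (fun t : Equiv.Perm (Fin n) × Equiv.Perm (Fin n) ×
      Equiv.Perm (Fin n) => permDes t.2.1)]
  apply Finset.sum_congr rfl
  intro J' _
  have a3 : Nat.card {t : Equiv.Perm (Fin n) × Equiv.Perm (Fin n) ×
      Equiv.Perm (Fin n) // (t.1 * t.2.1 * t.2.2 = 1 ∧ permDes t.1 = I' ∧ permDes t.2.2 ⊆ K)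
      ∧ permDes t.2.1 = J'} = Nat.card {t : Equiv.Perm (Fin n) × Equiv.Perm (Fin n) ×
      Equiv.Perm (Fin n) // (t.1 * t.2.1 * t.2.2 = 1 ∧ permDes t.1 = I' ∧ permDes t.2.1 = J')
      ∧ permDes t.2.2 ⊆ K} :=
    Nat.card_congr (Equiv.subtypeEquivRight fun t => by tauto)
  rw [a3, card_subset_eq_sum _ (fun t : Equiv.Perm (Fin n) × Equiv.Perm (Fin n) ×
      Equiv.Perm (Fin n) => permDes t.2.2)]
  apply Finset.sum_congr rfl
  intro K' _
  exact Nat.card_congr (Equiv.subtypeEquivRight fun t => by tauto)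

/-- The right-hand side of the theorem. -/
def rhs (n : ℕ) (χ : n.Partition → Equiv.Perm (Fin n) → ℂ) (I J K : Finset ℕ) : ℂ :=
  ∑ l : n.Partition, ∑ m : n.Partition, ∑ v : n.Partition,
        ((n.factorial : ℂ)⁻¹ * ∑ σ : Equiv.Perm (Fin n), χ l σ * χ m σ * χ v σ) *
          (dCoef (toYD l) n I) * (dCoef (toYD m) n J) * (dCoef (toYD v) n K)

/-- The ribbon character. -/
def rib (n : ℕ) (χ : n.Partition → Equiv.Perm (Fin n) → ℂ) (σ : Equiv.Perm (Fin n))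
    (I : Finset ℕ) : ℂ := ∑ l : n.Partition, χ l σ * dCoef (toYD l) n I

lemma rhs_eq (n : ℕ) (χ : n.Partition → Equiv.Perm (Fin n) → ℂ) (I J K : Finset ℕ) :
    rhs n χ I J K = (n.factorial : ℂ)⁻¹ * ∑ σ, rib n χ σ I * rib n χ σ J * rib n χ σ K := by
  have h : ∀ σ, rib n χ σ I * rib n χ σ J * rib n χ σ K =
      ∑ l : n.Partition, ∑ m : n.Partition, ∑ v : n.Partition, χ l σ * dCoef (toYD l) n I *
        (χ m σ * dCoef (toYD m) n J) * (χ v σ * dCoef (toYD v) n K) := by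
    intro σ
    unfold rib
    rw [Finset.sum_mul_sum, Finset.sum_mul]
    apply Finset.sum_congr rfl; intro l _
    rw [Finset.sum_mul]
    apply Finset.sum_congr rfl; intro m _
    rw [Finset.mul_sum]
  simp only [h]
  unfold rhs
  symm
  rw [Finset.sum_comm, Finset.mul_sum]
  apply Finset.sum_congr rfl; intro l _
  rw [Finset.sum_comm, Finset.mul_sum]
  apply Finset.sum_congr rfl; intro m _
  rw [Finset.sum_comm, Finset.mul_sum]
  apply Finset.sum_congr rfl; intro v _
  simp only [Finset.mul_sum, Finset.sum_mul]
  apply Finset.sum_congr rfl; intro σ _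
  ring

lemma rib_sum (n : ℕ) (χ : n.Partition → Equiv.Perm (Fin n) → ℂ)
    (hχ : ∀ σ : Equiv.Perm (Fin n),
      pProd (fullCycleType σ) = ∑ p : n.Partition, χ p σ • schur (toYD p))
    (σ : Equiv.Perm (Fin n)) (I : Finset ℕ) :
    ∑ I' ∈ I.powerset, rib n χ σ I' = (Nat.card (FW n I σ) : ℂ) := by
  rw [← coeff_pProd, hχ, map_sum]
  unfold rib
  rw [Finset.sum_comm]
  apply Finset.sum_congr rfl; intro l _
  rw [← Finset.mul_sum, map_smul, smul_eq_mul]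
  congr 1
  have h : MvPowerSeries.coeff (cnt (bw n I)) (schur (toYD l)) =
    (Nat.card {S : SemistandardYoungTableau (toYD l) //
      ∀ j, ssytWeight S j = cnt (bw n I) j} : ℂ) := rfl
  rw [h, kostka_eq (toYD_card l)]
  push_cast
  rfl

lemma main_sum (n : ℕ) (χ : n.Partition → Equiv.Perm (Fin n) → ℂ)
    (hχ : ∀ σ : Equiv.Perm (Fin n),
      pProd (fullCycleType σ) = ∑ p : n.Partition, χ p σ • schur (toYD p))
    (I J K : Finset ℕ) :
    ∑ I' ∈ I.powerset, ∑ J' ∈ J.powerset, ∑ K' ∈ K.powerset, (Nat.card (TE n I' J' K') : ℂ) =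
    ∑ I' ∈ I.powerset, ∑ J' ∈ J.powerset, ∑ K' ∈ K.powerset, rhs n χ I' J' K' := by
  have h1 := burnside n I J K
  rw [TP_card] at h1
  have h2 := congrArg (fun k : ℕ => (k : ℂ)) h1
  push_cast at h2
  have hne : (n.factorial : ℂ) ≠ 0 := by exact_mod_cast n.factorial_ne_zero
  apply mul_right_cancel₀ hne
  rw [← h2]
  simp only [rhs_eq, ← rib_sum n χ hχ]
  have h3 : ∀ σ, (∑ I' ∈ I.powerset, rib n χ σ I') * (∑ J' ∈ J.powerset, rib n χ σ J') *
      (∑ K' ∈ K.powerset, rib n χ σ K') = ∑ I' ∈ I.powerset, ∑ J' ∈ J.powerset,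
      ∑ K' ∈ K.powerset, rib n χ σ I' * rib n χ σ J' * rib n χ σ K' := by
    intro σ
    rw [Finset.sum_mul_sum, Finset.sum_mul]
    apply Finset.sum_congr rfl; intro l _
    rw [Finset.sum_mul]
    apply Finset.sum_congr rfl; intro m _
    rw [Finset.mul_sum]
  simp only [h3]
  rw [Finset.sum_comm, Finset.sum_mul]
  apply Finset.sum_congr rfl; intro I' _
  rw [Finset.sum_comm, Finset.sum_mul]
  apply Finset.sum_congr rfl; intro J' _
  rw [Finset.sum_comm, Finset.sum_mul]
  apply Finset.sum_congr rfl; intro K' _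
  field_simp

/-- Let `χ λ` be the irreducible character of `S_n` indexed by `λ ⊢ n` (characterized,
via Frobenius, by `p_{cycletype(σ)} = Σ_λ χ^λ(σ) s_λ`). The number of triples
`(σ₁, σ₂, σ₃)` of permutations of `S_n` with `σ₁σ₂σ₃ = id`, `Des(σ₁) = I`,
`Des(σ₂) = J`, `Des(σ₃) = K` equals
`Σ_{λ,μ,ν ⊢ n} g(λ,μ,ν) d_{λ,I} d_{μ,J} d_{ν,K}`, where
`g(λ,μ,ν) = (1/n!) Σ_σ χ^λ(σ) χ^μ(σ) χ^ν(σ)` is the Kronecker coefficient. -/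
theorem stmt9 (n : ℕ) (hn : 1 ≤ n) (I J K : Finset ℕ)
    (χ : n.Partition → Equiv.Perm (Fin n) → ℂ)
    (hχ : ∀ σ : Equiv.Perm (Fin n),
      pProd (fullCycleType σ) = ∑ p : n.Partition, χ p σ • schur (toYD p)) :
    (Nat.card {t : Equiv.Perm (Fin n) × Equiv.Perm (Fin n) × Equiv.Perm (Fin n) //
        t.1 * t.2.1 * t.2.2 = 1 ∧ permDes t.1 = I ∧ permDes t.2.1 = J ∧
          permDes t.2.2 = K} : ℂ) =
      ∑ l : n.Partition, ∑ m : n.Partition, ∑ v : n.Partition,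
        ((n.factorial : ℂ)⁻¹ * ∑ σ : Equiv.Perm (Fin n), χ l σ * χ m σ * χ v σ) *
          (dCoef (toYD l) n I) * (dCoef (toYD m) n J) * (dCoef (toYD v) n K) := by
  have h1 := main_sum n χ hχ
  have h2 : ∀ J K I : Finset ℕ, ∑ J' ∈ J.powerset, ∑ K' ∈ K.powerset, (Nat.card (TE n I J' K') : ℂ) =
      ∑ J' ∈ J.powerset, ∑ K' ∈ K.powerset, rhs n χ I J' K' := fun J K =>
    eq_of_powerset_sum _ _ fun I => h1 I J K
  have h3 : ∀ I K J : Finset ℕ, ∑ K' ∈ K.powerset, (Nat.card (TE n I J K') : ℂ) =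
      ∑ K' ∈ K.powerset, rhs n χ I J K' := fun I K =>
    eq_of_powerset_sum _ _ fun J => h2 J K I
  exact eq_of_powerset_sum _ _ (fun K => h3 I K J) K
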